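/- arXiv:2001.00317 — 5 statements merged into one kernel-verified Lean document; each statement's English description precedes it below -/
import Mathlib

section
/- (Proposition 1.) Let N₀ be the smallest k-linear subspace of A containing X(i,0) for all i < n and closed under the operation ∘. Then N₀ equals the k-linear span of the set of all monomials u of A satisfying deg(u) − d(u) = 1. -/
open MvPolynomial

/-!
Give `X (i, r)` the weight `1 - r`, so that `deg u - d u` is the weight of a monomial `u`. Since `δ`
lowers weights by one, the polynomials of weight `1` are closed under `f ∘ g = f * δ g`.

Conversely, let `V` be closed under `∘` and contain every `X (i, 0)`, and let `T` be the algebra of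
all `f` with `V * f ⊆ V`; it contains `δ V`. If `z` is a product of `r` variables of order zero,
the Leibniz rule writes `z * X (i, r + 1)` as `δ (z * X (i, r)) - δ z * X (i, r)`, and induction on
`r` puts both terms into `T`. A monomial of weight zero is a product of such elements, hence lies in
`T`, and a monomial of weight one is some `X (j, 0)` times a monomial of weight zero, hence lies in
`V`.
-/

namespace FreeNovikov

section Polynomial

variable {R τ : Type*} [CommSemiring R]

lemma exists_eq_add_single {m : τ →₀ ℕ} {p : τ} (hp : p ∈ m.support) :
    ∃ m', m = m' + Finsupp.single p 1 := by
  refine ⟨m - Finsupp.single p 1, (tsub_add_cancel_of_le ?_).symm⟩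
  exact Finsupp.single_le_iff.mpr (Nat.one_le_iff_ne_zero.mpr (Finsupp.mem_support_iff.mp hp))

lemma monomial_eq_smul_monomial_one (m : τ →₀ ℕ) (r : R) :
    monomial m r = r • monomial m (1 : R) := by
  rw [smul_monomial, smul_eq_mul, mul_one]

lemma derivation_monomial_mem {M : Type*} [AddCommMonoid M] [Module R M]
    [Module (MvPolynomial τ R) M] [IsScalarTower R (MvPolynomial τ R) M]
    (D : Derivation R (MvPolynomial τ R) M) (W : Submodule R M) {m : τ →₀ ℕ}
    (h : ∀ m' p, m = m' + Finsupp.single p 1 → monomial m' (1 : R) • D (X p) ∈ W) :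
    D (monomial m 1) ∈ W := by
  have hD : D = mkDerivation R fun p => D (X p) :=
    derivation_ext fun p => (mkDerivation_X R (fun p => D (X p)) p).symm
  rw [hD, mkDerivation_monomial, one_smul]
  refine W.sum_mem fun p hp => ?_
  obtain ⟨m', rfl⟩ := exists_eq_add_single hp
  beta_reduce
  rw [add_tsub_cancel_right, monomial_eq_smul_monomial_one, smul_assoc]
  exact W.smul_mem _ (h m' p rfl)

lemma isWeightedHomogeneous_derivation {M : Type*} [AddCommMonoid M] {w : τ → M} {e : M}
    {D : Derivation R (MvPolynomial τ R) (MvPolynomial τ R)}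
    (hD : ∀ p, IsWeightedHomogeneous w (D (X p)) (w p + e))
    {f : MvPolynomial τ R} {d : M} (hf : IsWeightedHomogeneous w f d) :
    IsWeightedHomogeneous w (D f) (d + e) := by
  induction hf using IsWeightedHomogeneous.induction_on with
  | zero => simpa only [map_zero] using isWeightedHomogeneous_zero R w (d + e)
  | add f g _ _ hf hg => simpa only [map_add] using hf.add hg
  | monomial m r hm =>
    rw [monomial_eq_smul_monomial_one, D.map_smul]
    refine (weightedHomogeneousSubmodule R w (d + e)).smul_mem r
      (derivation_monomial_mem D _ ?_)
    rintro m' p rfl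
    have hmul := (isWeightedHomogeneous_monomial w m' (1 : R) rfl).mul (hD p)
    rwa [← add_assoc, ← one_smul ℕ (w p), ← Finsupp.weight_single, ← map_add, hm] at hmul

lemma weightedHomogeneousSubmodule_eq_span {M : Type*} [AddCommMonoid M] (w : τ → M) (d : M) :
    weightedHomogeneousSubmodule R w d =
      Submodule.span R {u | ∃ m, u = monomial m 1 ∧ Finsupp.weight w m = d} := by
  rw [weightedHomogeneousSubmodule_eq_finsupp_supported,
    AddMonoidAlgebra.supported_eq_span_single]
  congr 1
  ext u
  exact ⟨fun ⟨m, hm, hu⟩ => ⟨m, hu.symm, hm⟩, fun ⟨m, hu, hm⟩ => ⟨m, hm, hu.symm⟩⟩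

end Polynomial

section Weight

variable {σ : Type*}

/-- The weight `1 - r` of the variable `X (i, r)`; the weight of a monomial `u` is then
`deg u - d u`. It is the negative of the usual weight in the theory of Novikov algebras. -/
def novikovWeight (p : σ × ℕ) : ℤ := 1 - p.2

lemma weight_novikovWeight (m : (σ × ℕ) →₀ ℕ) :
    Finsupp.weight novikovWeight m = m.degree - Finsupp.weight Prod.snd m := by
  induction m using Finsupp.induction_linear with
  | zero => simp
  | add m m' hm hm' => simp only [map_add, hm, hm', Nat.cast_add]; ring
  | single p e =>
    simp only [Finsupp.weight_single, Finsupp.degree_single, novikovWeight, nsmul_eq_mul,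
      smul_eq_mul, Nat.cast_mul]
    ring

lemma weight_novikovWeight_eq_one_iff {m : (σ × ℕ) →₀ ℕ} :
    Finsupp.weight novikovWeight m = 1 ↔
      (m.sum fun _ e => e) = (m.sum fun p e => p.2 * e) + 1 := by
  have hsnd : Finsupp.weight Prod.snd m = m.sum fun p e => p.2 * e := by
    simp only [Finsupp.weight_apply, smul_eq_mul, mul_comm]
  have hdeg : m.degree = m.sum fun _ e => e := rfl
  rw [weight_novikovWeight, hsnd, hdeg]
  omega

lemma exists_eq_add_single_of_weight_pos {m : (σ × ℕ) →₀ ℕ}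
    (hm : 0 < Finsupp.weight novikovWeight m) :
    ∃ m' j, m = m' + Finsupp.single (j, 0) 1 := by
  by_contra! hne
  refine hm.not_ge (Finset.sum_nonpos fun ⟨j, r⟩ hp => ?_)
  have hr : r ≠ 0 := by
    rintro rfl
    obtain ⟨m', hm'⟩ := exists_eq_add_single hp
    exact hne m' j hm'
  have hw : novikovWeight (j, r) ≤ 0 := by simp only [novikovWeight]; omega
  exact nsmul_nonpos hw _

lemma exists_eq_add_single_succ {m : (σ × ℕ) →₀ ℕ} (hm : Finsupp.weight novikovWeight m = 0)
    (hne : m ≠ 0) : ∃ m' i r, m = m' + Finsupp.single (i, r + 1) 1 := by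
  have hsnd : Finsupp.weight Prod.snd m ≠ 0 := by
    rw [weight_novikovWeight, sub_eq_zero, Nat.cast_inj] at hm
    rwa [← hm, ne_eq, Finsupp.degree_eq_zero_iff]
  obtain ⟨⟨i, r⟩, hp, hr⟩ := Finset.exists_ne_zero_of_sum_ne_zero hsnd
  obtain ⟨r, rfl⟩ := Nat.exists_eq_succ_of_ne_zero (right_ne_zero_of_smul hr)
  obtain ⟨m', rfl⟩ := exists_eq_add_single hp
  exact ⟨m', i, r, rfl⟩

lemma exists_eq_add_of_le_weight {m : (σ × ℕ) →₀ ℕ} {t : ℕ}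
    (hm : t ≤ Finsupp.weight novikovWeight m) :
    ∃ u z, m = u + z ∧ Finsupp.weight Prod.snd z = 0 ∧ z.degree = t := by
  induction t generalizing m with
  | zero => exact ⟨m, 0, (add_zero m).symm, map_zero _, map_zero _⟩
  | succ t ih =>
    obtain ⟨m', j, rfl⟩ := exists_eq_add_single_of_weight_pos (m := m) (by omega)
    have hm' : t ≤ Finsupp.weight novikovWeight m' := by
      simp only [map_add, Finsupp.weight_single, one_smul, novikovWeight] at hm
      omega
    obtain ⟨u, z, rfl, hz, hdeg⟩ := ih hm'
    refine ⟨u, z + Finsupp.single (j, 0) 1, add_assoc _ _ _, ?_, ?_⟩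
    · rw [map_add, hz, Finsupp.weight_single, smul_zero, add_zero]
    · rw [map_add, hdeg, Finsupp.degree_single]

end Weight

lemma mul_derivation_mem_weightedHomogeneousSubmodule {R σ : Type*} [CommSemiring R]
    {δ : Derivation R (MvPolynomial (σ × ℕ) R) (MvPolynomial (σ × ℕ) R)}
    (hδ : ∀ i r, δ (X (i, r)) = X (i, r + 1)) {d : ℤ} {f g : MvPolynomial (σ × ℕ) R}
    (hf : f ∈ weightedHomogeneousSubmodule R novikovWeight d)
    (hg : g ∈ weightedHomogeneousSubmodule R novikovWeight 1) :
    f * δ g ∈ weightedHomogeneousSubmodule R novikovWeight d := by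
  have hδw (p : σ × ℕ) :
      IsWeightedHomogeneous novikovWeight (δ (X p)) (novikovWeight p + -1) := by
    have hw : novikovWeight p + -1 = novikovWeight (p.1, p.2 + 1) := by
      simp only [novikovWeight, Nat.cast_add, Nat.cast_one]
      ring
    rw [hw, hδ p.1 p.2]
    exact isWeightedHomogeneous_X R _ _
  have hmul := IsWeightedHomogeneous.mul hf (isWeightedHomogeneous_derivation hδw hg)
  rwa [add_neg_cancel, add_zero] at hmul

section Multiplier

variable {R A : Type*} [CommSemiring R] [Semiring A] [Algebra R A]

/-- The subalgebra of all `f` with `V * f ⊆ V`. For commutative `A` its underlying submodule is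
`V / V`. -/
def multiplierSubalgebra (V : Submodule R A) : Subalgebra R A where
  carrier := {f | ∀ a ∈ V, a * f ∈ V}
  mul_mem' hf hg a ha := by
    rw [← mul_assoc]
    exact hg _ (hf a ha)
  add_mem' hf hg a ha := by
    rw [mul_add]
    exact V.add_mem (hf a ha) (hg a ha)
  algebraMap_mem' r a ha := by
    rw [← Algebra.commutes, ← Algebra.smul_def]
    exact V.smul_mem r ha

end Multiplier

section Closed

variable {R σ : Type*} [CommRing R]
  {δ : Derivation R (MvPolynomial (σ × ℕ) R) (MvPolynomial (σ × ℕ) R)}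
  {V : Submodule R (MvPolynomial (σ × ℕ) R)}

lemma monomial_mul_X_mem_multiplierSubalgebra (hδ : ∀ i r, δ (X (i, r)) = X (i, r + 1))
    (hX : ∀ i, X (i, 0) ∈ V) (hV : ∀ a ∈ V, ∀ b ∈ V, a * δ b ∈ V) (i : σ) {r : ℕ}
    {z : (σ × ℕ) →₀ ℕ} (hz : Finsupp.weight Prod.snd z = 0) (hdeg : z.degree = r) :
    monomial z 1 * X (i, r + 1) ∈ multiplierSubalgebra V := by
  have hδV {b} (hb : b ∈ V) : δ b ∈ multiplierSubalgebra V := fun a ha => hV a ha b hb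
  have hX₁ (j : σ) : X (j, 1) ∈ multiplierSubalgebra V := hδ j 0 ▸ hδV (hX j)
  induction r generalizing z with
  | zero =>
    rw [(Finsupp.degree_eq_zero_iff z).mp hdeg]
    simpa using hX₁ i
  | succ r ih =>
    have hzX : monomial z 1 * X (i, r + 1) ∈ V := by
      obtain ⟨z', j, rfl⟩ :=
        exists_eq_add_single_of_weight_pos (m := z) (by rw [weight_novikovWeight]; omega)
      simp only [map_add, Finsupp.weight_single, Finsupp.degree_single, smul_zero, add_zero,
        Nat.add_right_cancel_iff] at hz hdeg
      rw [monomial_add_single, pow_one, mul_right_comm, mul_comm]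
      exact ih hz hdeg _ (hX j)
    have hδz : X (i, r + 1) * δ (monomial z 1) ∈ multiplierSubalgebra V := by
      refine derivation_monomial_mem ((X (i, r + 1) : MvPolynomial (σ × ℕ) R) • δ)
        (multiplierSubalgebra V).toSubmodule ?_
      rintro z' ⟨j, s⟩ rfl
      simp only [map_add, Finsupp.weight_single, Finsupp.degree_single, one_smul,
        Nat.add_eq_zero_iff, Nat.add_right_cancel_iff] at hz hdeg
      obtain ⟨hz', rfl⟩ := hz
      rw [Derivation.smul_apply, hδ, smul_eq_mul, smul_eq_mul, ← mul_assoc]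
      exact (multiplierSubalgebra V).mul_mem (ih hz' hdeg) (hX₁ j)
    have hleibniz : monomial z 1 * X (i, r + 1 + 1) =
        δ (monomial z 1 * X (i, r + 1)) - X (i, r + 1) * δ (monomial z 1) := by
      rw [δ.leibniz, hδ, smul_eq_mul, smul_eq_mul, add_sub_cancel_right]
    rw [hleibniz]
    exact sub_mem (hδV hzX) hδz

lemma monomial_mem_multiplierSubalgebra (hδ : ∀ i r, δ (X (i, r)) = X (i, r + 1))
    (hX : ∀ i, X (i, 0) ∈ V) (hV : ∀ a ∈ V, ∀ b ∈ V, a * δ b ∈ V) {m : (σ × ℕ) →₀ ℕ}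
    (hm : Finsupp.weight novikovWeight m = 0) : monomial m 1 ∈ multiplierSubalgebra V := by
  induction hN : m.degree using Nat.strong_induction_on generalizing m with
  | _ N ih =>
  obtain rfl | hne := eq_or_ne m 0
  · exact one_mem _
  obtain ⟨m', i, r, rfl⟩ := exists_eq_add_single_succ hm hne
  have hm' : Finsupp.weight novikovWeight m' = r := by
    simp only [map_add, Finsupp.weight_single, one_smul, novikovWeight] at hm
    omega
  obtain ⟨u, z, rfl, hz, hdeg⟩ := exists_eq_add_of_le_weight hm'.ge
  have hu : Finsupp.weight novikovWeight u = 0 := by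
    rw [map_add, weight_novikovWeight z] at hm'
    omega
  have hlt : u.degree < N := by
    simp only [map_add, Finsupp.degree_single] at hN
    omega
  have hsplit : monomial (u + z + Finsupp.single (i, r + 1) 1) (1 : R) =
      monomial u 1 * (monomial z 1 * X (i, r + 1)) := by
    rw [monomial_add_single, pow_one, ← mul_assoc, monomial_mul, one_mul]
  rw [hsplit]
  exact mul_mem (ih _ hlt hu rfl)
    (monomial_mul_X_mem_multiplierSubalgebra hδ hX hV i hz hdeg)

lemma monomial_mem_of_weight_eq_one (hδ : ∀ i r, δ (X (i, r)) = X (i, r + 1))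
    (hX : ∀ i, X (i, 0) ∈ V) (hV : ∀ a ∈ V, ∀ b ∈ V, a * δ b ∈ V) {m : (σ × ℕ) →₀ ℕ}
    (hm : Finsupp.weight novikovWeight m = 1) : monomial m 1 ∈ V := by
  obtain ⟨m', j, rfl⟩ := exists_eq_add_single_of_weight_pos (hm ▸ one_pos)
  have hm' : Finsupp.weight novikovWeight m' = 0 := by
    simp only [map_add, Finsupp.weight_single, one_smul, novikovWeight] at hm
    omega
  rw [monomial_add_single, pow_one, mul_comm]
  exact monomial_mem_multiplierSubalgebra hδ hX hV hm' _ (hX j)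

end Closed

end FreeNovikov

open FreeNovikov in
theorem free_novikov_basis_general {R σ : Type*} [CommRing R]
    (δ : Derivation R (MvPolynomial (σ × ℕ) R) (MvPolynomial (σ × ℕ) R))
    (hδ : ∀ i r, δ (X (i, r)) = X (i, r + 1)) :
    sInf {p : Submodule R (MvPolynomial (σ × ℕ) R) |
        (∀ i, X (i, 0) ∈ p) ∧ ∀ a ∈ p, ∀ b ∈ p, a * δ b ∈ p} =
      Submodule.span R {u | ∃ m : (σ × ℕ) →₀ ℕ, u = monomial m 1 ∧
        (m.sum fun _ e => e) = (m.sum fun p e => p.2 * e) + 1} := by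
  simp only [← weight_novikovWeight_eq_one_iff]
  apply le_antisymm
  · rw [← weightedHomogeneousSubmodule_eq_span]
    exact sInf_le ⟨fun i => isWeightedHomogeneous_X R novikovWeight (i, 0),
      fun _ ha _ hb => mul_derivation_mem_weightedHomogeneousSubmodule hδ ha hb⟩
  · refine le_sInf fun V ⟨hX, hV⟩ => Submodule.span_le.mpr ?_
    rintro _ ⟨m, rfl, hm⟩
    exact monomial_mem_of_weight_eq_one hδ hX hV hm

/-- Proposition 1: the smallest `k`-subspace of `A = k[X(i,r)]` containing the `X(i,0)` and
closed under `f ∘ g := f * δ g` equals the span of the monomials `u` with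
`deg u - d u = 1`. -/
theorem free_novikov_basis (k : Type*) [Field k] [CharZero k] (n : ℕ) (hn : 0 < n)
    (δ : Derivation k (MvPolynomial (Fin n × ℕ) k) (MvPolynomial (Fin n × ℕ) k))
    (hδ : ∀ (i : Fin n) (r : ℕ), δ (X (i, r)) = X (i, r + 1)) :
    sInf {p : Submodule k (MvPolynomial (Fin n × ℕ) k) |
        (∀ i : Fin n, X (i, (0 : ℕ)) ∈ p) ∧ ∀ a ∈ p, ∀ b ∈ p, a * δ b ∈ p} =
      Submodule.span k {u : MvPolynomial (Fin n × ℕ) k |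
        ∃ m : (Fin n × ℕ) →₀ ℕ, u = monomial m 1 ∧
          (m.sum fun _ e => e) = (m.sum fun p e => p.2 * e) + 1} :=
  free_novikov_basis_general δ hδ
end

section
/- If u and v are monomials of A with deg(u) − d(u) = 1 and deg(v) − d(v) = 1, then u ∘ v = u · δ(v) lies in the k-linear span of the set of all monomials w of A satisfying deg(w) − d(w) = 1. Consequently this span is closed under the operation ∘. -/
open MvPolynomial

/-!
Give `X (i, r)` the weight `1 - r ∈ ℤ`. Then `deg - d` is the weight of a monomial, so the
span in question is the weighted homogeneous component of weight `1`. A derivation that shifts the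
weight of every variable by `c` shifts all weights by `c`, and `δ` does so with `c = -1`. Hence
`u * δ v` has weight `1 + (1 - 1) = 1`.
-/

section Derivation

variable {σ R M : Type*} [CommSemiring R] [AddCommMonoid M] {w : σ → M}

lemma isWeightedHomogeneous_derivation_monomial
    {D : Derivation R (MvPolynomial σ R) (MvPolynomial σ R)} {c : M}
    (hD : ∀ i, (D (X i)).IsWeightedHomogeneous w (w i + c)) (s : σ →₀ ℕ) (a : R) :
    (D (monomial s a)).IsWeightedHomogeneous w (Finsupp.weight w s + c) := by
  have hDX : D = mkDerivation R fun i => D (X i) := derivation_ext fun i => by rw [mkDerivation_X]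
  rw [hDX, mkDerivation_monomial]
  refine Submodule.smul_mem (weightedHomogeneousSubmodule R w _) a
    (IsWeightedHomogeneous.sum _ _ _ fun i hi => ?_)
  rw [← Finsupp.weight_sub_single_add (w := w) (Finsupp.mem_support_iff.mp hi), add_assoc]
  exact (isWeightedHomogeneous_monomial w _ _ rfl).mul (hD i)

lemma isWeightedHomogeneous_derivation
    {D : Derivation R (MvPolynomial σ R) (MvPolynomial σ R)} {c m : M} {f : MvPolynomial σ R}
    (hD : ∀ i, (D (X i)).IsWeightedHomogeneous w (w i + c)) (hf : f.IsWeightedHomogeneous w m) :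
    (D f).IsWeightedHomogeneous w (m + c) := by
  rw [f.as_sum, map_sum]
  refine IsWeightedHomogeneous.sum _ _ _ fun s hs => ?_
  rw [← hf (mem_support_iff.mp hs)]
  exact isWeightedHomogeneous_derivation_monomial hD s _

end Derivation

/-- The weight `1 - r` of the variable `X (i, r)`, for which the weight of a monomial is `deg - d`.
It takes values in `ℤ` so that the subtraction does not truncate. -/
def novikovWeight {ι : Type*} (p : ι × ℕ) : ℤ := 1 - p.2

/-- The span of the monomials `u` with `deg u - d u = 1`, the underlying module of the Novikov
algebra of differential polynomials; the condition is written `deg u = d u + 1` in `ℕ`. -/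
noncomputable def novikovSubmodule (ι R : Type*) [CommSemiring R] :
    Submodule R (MvPolynomial (ι × ℕ) R) :=
  Submodule.span R {u | ∃ m : (ι × ℕ) →₀ ℕ, u = monomial m 1 ∧
    (m.sum fun _ e => e) = (m.sum fun p e => p.2 * e) + 1}

section Novikov

variable {ι R : Type*} [CommSemiring R]

lemma weight_novikovWeight (m : (ι × ℕ) →₀ ℕ) :
    Finsupp.weight novikovWeight m =
      ((m.sum fun _ e => e : ℕ) : ℤ) - (m.sum fun p e => p.2 * e : ℕ) := by
  simp only [Finsupp.weight_apply, Finsupp.sum, novikovWeight, Nat.cast_sum, Nat.cast_mul,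
    nsmul_eq_mul, ← Finset.sum_sub_distrib]
  exact Finset.sum_congr rfl fun p _ => by ring

lemma weight_novikovWeight_eq_one_iff {m : (ι × ℕ) →₀ ℕ} :
    Finsupp.weight novikovWeight m = 1 ↔
      (m.sum fun _ e => e) = (m.sum fun p e => p.2 * e) + 1 := by
  rw [weight_novikovWeight]
  omega

lemma novikovSubmodule_eq_weightedHomogeneousSubmodule :
    novikovSubmodule ι R = weightedHomogeneousSubmodule R novikovWeight 1 := by
  rw [weightedHomogeneousSubmodule_eq_finsupp_supported]
  refine Eq.trans ?_ (restrictSupport_eq_span R _).symm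
  refine congrArg (Submodule.span R) (Set.ext fun u => exists_congr fun m => ?_)
  exact and_comm.trans (and_congr weight_novikovWeight_eq_one_iff.symm eq_comm)

theorem novikov_span_closed_general
    (δ : Derivation R (MvPolynomial (ι × ℕ) R) (MvPolynomial (ι × ℕ) R))
    (hδ : ∀ (i : ι) (r : ℕ), δ (X (i, r)) = X (i, r + 1)) {f g : MvPolynomial (ι × ℕ) R}
    (hf : f ∈ novikovSubmodule ι R) (hg : g ∈ novikovSubmodule ι R) :
    f * δ g ∈ novikovSubmodule ι R := by
  rw [novikovSubmodule_eq_weightedHomogeneousSubmodule] at hf hg ⊢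
  have hδX (p : ι × ℕ) :
      (δ (X p)).IsWeightedHomogeneous novikovWeight (novikovWeight p + -1) := by
    have hweight : novikovWeight p + -1 = novikovWeight (p.1, p.2 + 1) := by
      simp only [novikovWeight, Nat.cast_add, Nat.cast_one]
      ring
    rw [hδ, hweight]
    exact isWeightedHomogeneous_X R novikovWeight (p.1, p.2 + 1)
  have hδg : (δ g).IsWeightedHomogeneous novikovWeight 0 :=
    isWeightedHomogeneous_derivation hδX hg
  exact IsWeightedHomogeneous.mul hf hδg

end Novikov

/-- If `u, v` are monomials with `deg - d = 1`, then `u ∘ v = u * δ v` lies in the span of the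
monomials with `deg - d = 1`; consequently this span is closed under `∘`. -/
theorem novikov_span_closed (k : Type*) [Field k] [CharZero k] (n : ℕ) (hn : 0 < n)
    (δ : Derivation k (MvPolynomial (Fin n × ℕ) k) (MvPolynomial (Fin n × ℕ) k))
    (hδ : ∀ (i : Fin n) (r : ℕ), δ (X (i, r)) = X (i, r + 1)) :
    (∀ mu mv : (Fin n × ℕ) →₀ ℕ,
      (mu.sum fun _ e => e) = (mu.sum fun p e => p.2 * e) + 1 →
      (mv.sum fun _ e => e) = (mv.sum fun p e => p.2 * e) + 1 →
      (monomial mu (1 : k)) * δ (monomial mv (1 : k)) ∈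
        Submodule.span k {u : MvPolynomial (Fin n × ℕ) k |
          ∃ m : (Fin n × ℕ) →₀ ℕ, u = monomial m 1 ∧
            (m.sum fun _ e => e) = (m.sum fun p e => p.2 * e) + 1}) ∧
    (∀ f g : MvPolynomial (Fin n × ℕ) k,
      f ∈ Submodule.span k {u : MvPolynomial (Fin n × ℕ) k |
          ∃ m : (Fin n × ℕ) →₀ ℕ, u = monomial m 1 ∧
            (m.sum fun _ e => e) = (m.sum fun p e => p.2 * e) + 1} →
      g ∈ Submodule.span k {u : MvPolynomial (Fin n × ℕ) k |
          ∃ m : (Fin n × ℕ) →₀ ℕ, u = monomial m 1 ∧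
            (m.sum fun _ e => e) = (m.sum fun p e => p.2 * e) + 1} →
      f * δ g ∈ Submodule.span k {u : MvPolynomial (Fin n × ℕ) k |
          ∃ m : (Fin n × ℕ) →₀ ℕ, u = monomial m 1 ∧
            (m.sum fun _ e => e) = (m.sum fun p e => p.2 * e) + 1}) :=
  ⟨fun mu mv hu hv => novikov_span_closed_general δ hδ (Submodule.subset_span ⟨mu, rfl, hu⟩)
    (Submodule.subset_span ⟨mv, rfl, hv⟩), fun _ _ => novikov_span_closed_general δ hδ⟩
end

section
/- Every monomial u of A with deg(u) − d(u) = 1 belongs to the smallest k-linear subspace of A containing X(i,0) for all i < n and closed under the operation ∘. -/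
open MvPolynomial

/-!
Induct on the total order of the monomial. A balanced monomial (degree one more than total order)
of positive total order has a factor `x⁽ʳ⁺¹⁾` and at least `r` factors `t₁, …, tᵣ` of order `0`;
write it as `w x⁽ʳ⁺¹⁾ t` with `t = t₁ ⋯ tᵣ`. Then `w`, `x⁽ʳ⁾ t` and every `w x⁽ʳ⁾ (t / tⱼ)` are
balanced of smaller total order, and the Leibniz rule reads
`w x⁽ʳ⁺¹⁾ t = w ∘ (x⁽ʳ⁾ t) - ∑ⱼ (w x⁽ʳ⁾ (t / tⱼ)) ∘ tⱼ`.
-/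

@[to_additive]
lemma prod_map_toMultiset {α M : Type*} [CommMonoid M] (m : α →₀ ℕ) (f : α → M) :
    (m.toMultiset.map f).prod = m.prod fun a e => f a ^ e := by
  induction m using Finsupp.induction_linear with
  | zero => simp
  | add m₁ m₂ h₁ h₂ =>
    rw [Finsupp.prod_add_index' (by simp) (fun a => pow_add (f a)), map_add, Multiset.map_add,
      Multiset.prod_add, h₁, h₂]
  | single a e => simp [Multiset.map_nsmul, Multiset.prod_nsmul]

section Derivation

variable {ι R A M : Type*} [DecidableEq ι]

lemma derivation_multiset_prod [CommSemiring R] [CommSemiring A] [Algebra R A] [AddCommMonoid M]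
    [Module A M] [Module R M] (δ : Derivation R A M) (y : ι → A) (t : Multiset ι) :
    δ (t.map y).prod = (t.map fun j => ((t.erase j).map y).prod • δ (y j)).sum := by
  induction t using Multiset.induction_on with
  | empty => simp
  | cons i t ih =>
    have erase_cons : ∀ j ∈ t, (((i ::ₘ t).erase j).map y).prod • δ (y j) =
        y i • ((t.erase j).map y).prod • δ (y j) := fun j hj => by
      rw [Multiset.erase_cons_tail_of_mem hj, Multiset.map_cons, Multiset.prod_cons, mul_smul]
    rw [Multiset.map_cons, Multiset.prod_cons, δ.leibniz, ih, Multiset.map_cons,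
      Multiset.sum_cons, Multiset.erase_cons_head, Multiset.map_congr rfl erase_cons,
      Multiset.smul_sum, Multiset.map_map, add_comm]
    rfl

lemma mul_derivation_mul_prod_mem [CommRing R] [CommRing A] [Algebra R A] {δ : Derivation R A A}
    {p : Submodule R A} (hp : ∀ a ∈ p, ∀ b ∈ p, a * δ b ∈ p) {y : ι → A} (hy : ∀ j, y j ∈ p)
    {a b : A} {t : Multiset ι} (ha : a ∈ p) (hb : b * (t.map y).prod ∈ p)
    (hab : ∀ j ∈ t, a * b * ((t.erase j).map y).prod ∈ p) :
    a * δ b * (t.map y).prod ∈ p := by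
  have leibniz : a * δ (b * (t.map y).prod) =
      a * b * δ (t.map y).prod + a * δ b * (t.map y).prod := by
    simp only [δ.leibniz, smul_eq_mul]
    ring
  have correction : a * b * δ (t.map y).prod ∈ p := by
    rw [derivation_multiset_prod, ← Multiset.sum_map_mul_left]
    refine multiset_sum_mem _ fun c hc => ?_
    obtain ⟨j, hj, rfl⟩ := Multiset.mem_map.1 hc
    rw [smul_eq_mul, ← mul_assoc]
    exact hp _ (hab j hj) _ (hy j)
  exact (p.add_mem_iff_right correction).1 (leibniz ▸ hp _ ha _ hb)

end Derivation

section TotalOrder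

variable {σ : Type*}

/-- The total order `d(u)` of the differential monomial `u` whose factors `x i⁽ʳ⁾` are listed, with
multiplicity, as the pairs `(i, r)` of `s`. -/
def totalOrder (s : Multiset (σ × ℕ)) : ℕ := (s.map Prod.snd).sum

@[simp]
lemma totalOrder_cons (z : σ × ℕ) (s : Multiset (σ × ℕ)) :
    totalOrder (z ::ₘ s) = z.2 + totalOrder s := by
  simp [totalOrder]

@[simp]
lemma totalOrder_add (s t : Multiset (σ × ℕ)) :
    totalOrder (s + t) = totalOrder s + totalOrder t := by
  simp [totalOrder]

@[simp]
lemma totalOrder_map_zero (t : Multiset σ) : totalOrder (t.map (·, 0)) = 0 := by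
  simp [totalOrder]

lemma totalOrder_eq_zero_iff {s : Multiset (σ × ℕ)} : totalOrder s = 0 ↔ ∀ z ∈ s, z.2 = 0 := by
  simp only [totalOrder, Multiset.sum_eq_zero_iff, Multiset.forall_mem_map_iff]

lemma exists_map_zero_le {s : Multiset (σ × ℕ)} {r : ℕ} (h : r + totalOrder s ≤ s.card) :
    ∃ t : Multiset σ, t.card = r ∧ t.map (·, 0) ≤ s := by
  induction s using Multiset.induction_on generalizing r with
  | empty => exact ⟨0, by simp_all⟩
  | cons z s ih =>
    obtain ⟨i, q⟩ := z
    simp only [totalOrder_cons, Multiset.card_cons] at h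
    rcases r with _ | r
    · exact ⟨0, by simp⟩
    · rcases q with _ | q
      · obtain ⟨t, ht, hts⟩ := ih (r := r) (by omega)
        exact ⟨i ::ₘ t, by simpa using ht, by simpa using hts⟩
      · obtain ⟨t, ht, hts⟩ := ih (r := r + 1) (by omega)
        exact ⟨t, ht, hts.trans (Multiset.le_cons_self _ _)⟩

lemma exists_eq_cons_map_zero_add {s : Multiset (σ × ℕ)} (hs : totalOrder s ≤ s.card)
    (h0 : totalOrder s ≠ 0) :
    ∃ (i : σ) (t : Multiset σ) (w : Multiset (σ × ℕ)),
      s = (i, t.card + 1) ::ₘ (t.map (·, 0) + w) := by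
  obtain ⟨i, r, hir⟩ : ∃ i r, (i, r + 1) ∈ s := by
    simp only [ne_eq, totalOrder_eq_zero_iff, not_forall] at h0
    obtain ⟨⟨i, q⟩, hz, hq⟩ := h0
    exact ⟨i, q - 1, by rwa [Nat.sub_one_add_one hq]⟩
  obtain ⟨s, rfl⟩ := Multiset.exists_cons_of_mem hir
  simp only [totalOrder_cons, Multiset.card_cons] at hs
  obtain ⟨t, rfl, hts⟩ := exists_map_zero_le (s := s) (r := r) (by omega)
  obtain ⟨w, rfl⟩ := Multiset.le_iff_exists_add.1 hts
  exact ⟨i, t, w, rfl⟩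

end TotalOrder

section DiffMonomial

variable {σ R A : Type*}

/-- The differential monomial `∏ δʳ (x i)` over the pairs `(i, r)` of `s`. A multiset of pairs plays
the role of an exponent function. -/
def diffMonomial [CommSemiring R] [CommSemiring A] [Algebra R A] (δ : Derivation R A A)
    (x : σ → A) (s : Multiset (σ × ℕ)) : A :=
  (s.map fun z => δ^[z.2] (x z.1)).prod

section CommSemiring

variable [CommSemiring R] [CommSemiring A] [Algebra R A] (δ : Derivation R A A) (x : σ → A)

@[simp]
lemma diffMonomial_cons (z : σ × ℕ) (s : Multiset (σ × ℕ)) :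
    diffMonomial δ x (z ::ₘ s) = δ^[z.2] (x z.1) * diffMonomial δ x s := by
  simp [diffMonomial]

@[simp]
lemma diffMonomial_add (s t : Multiset (σ × ℕ)) :
    diffMonomial δ x (s + t) = diffMonomial δ x s * diffMonomial δ x t := by
  simp [diffMonomial]

@[simp]
lemma diffMonomial_map_zero (t : Multiset σ) :
    diffMonomial δ x (t.map (·, 0)) = (t.map x).prod := by
  simp [diffMonomial, Function.comp_def]

end CommSemiring

theorem diffMonomial_mem [CommRing R] [CommRing A] [Algebra R A] {δ : Derivation R A A}
    {x : σ → A} {p : Submodule R A} (hx : ∀ i, x i ∈ p) (hp : ∀ a ∈ p, ∀ b ∈ p, a * δ b ∈ p)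
    {s : Multiset (σ × ℕ)} (hs : s.card = totalOrder s + 1) : diffMonomial δ x s ∈ p := by
  classical
  induction hN : totalOrder s using Nat.strong_induction_on generalizing s with
  | _ N ih =>
  replace ih {s' : Multiset (σ × ℕ)} (hlt : totalOrder s' < totalOrder s)
      (hs' : s'.card = totalOrder s' + 1) : diffMonomial δ x s' ∈ p := ih _ (hN ▸ hlt) hs' rfl
  by_cases h0 : totalOrder s = 0
  · obtain ⟨⟨i, r⟩, rfl⟩ := Multiset.card_eq_one.1 (by omega : s.card = 1)
    obtain rfl : r = 0 := totalOrder_eq_zero_iff.1 h0 (i, r) (Multiset.mem_singleton_self _)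
    simpa [diffMonomial] using hx i
  obtain ⟨i, t, w, rfl⟩ := exists_eq_cons_map_zero_add (by omega) h0
  simp only [totalOrder_cons, totalOrder_add, totalOrder_map_zero, Multiset.card_cons,
    Multiset.card_add, Multiset.card_map] at hs ih
  have hw : diffMonomial δ x w ∈ p := ih (by omega) (by omega)
  have hxt : δ^[t.card] (x i) * (t.map x).prod ∈ p := by
    simpa using ih (s' := (i, t.card) ::ₘ t.map (·, 0))
      (by simp only [totalOrder_cons, totalOrder_map_zero]; omega) (by simp)
  have hwxt : ∀ j ∈ t, diffMonomial δ x w * δ^[t.card] (x i) * ((t.erase j).map x).prod ∈ p := by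
    intro j hj
    have hcard := Multiset.card_erase_add_one hj
    have hmem := ih (s' := (i, t.card) ::ₘ ((t.erase j).map (·, 0) + w))
    simp only [totalOrder_cons, totalOrder_add, totalOrder_map_zero, Multiset.card_cons,
      Multiset.card_add, Multiset.card_map, diffMonomial_cons, diffMonomial_add,
      diffMonomial_map_zero] at hmem
    convert hmem (by omega) (by omega) using 1
    ring
  convert mul_derivation_mul_prod_mem hp hx hw hxt hwxt using 1
  simp only [diffMonomial_cons, diffMonomial_add, diffMonomial_map_zero,
    Function.iterate_succ_apply']
  ring

end DiffMonomial

section MvPolynomial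

variable {σ R : Type*}

lemma iterate_derivation_X [CommSemiring R]
    {δ : Derivation R (MvPolynomial (σ × ℕ) R) (MvPolynomial (σ × ℕ) R)}
    (hδ : ∀ i r, δ (X (i, r)) = X (i, r + 1)) (i : σ) (r : ℕ) :
    δ^[r] (X (i, 0)) = X (i, r) := by
  induction r with
  | zero => rfl
  | succ r ih => rw [Function.iterate_succ_apply', ih, hδ]

lemma diffMonomial_X_toMultiset [CommSemiring R]
    {δ : Derivation R (MvPolynomial (σ × ℕ) R) (MvPolynomial (σ × ℕ) R)}
    (hδ : ∀ i r, δ (X (i, r)) = X (i, r + 1)) (m : (σ × ℕ) →₀ ℕ) :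
    diffMonomial δ (fun i => X (i, 0)) m.toMultiset = monomial m 1 := by
  simp only [diffMonomial, iterate_derivation_X hδ, prod_map_toMultiset, monic_monomial_eq]

theorem monomial_mem_novikov_general [CommRing R]
    (δ : Derivation R (MvPolynomial (σ × ℕ) R) (MvPolynomial (σ × ℕ) R))
    (hδ : ∀ i r, δ (X (i, r)) = X (i, r + 1)) (m : (σ × ℕ) →₀ ℕ)
    (hm : (m.sum fun _ e => e) = (m.sum fun p e => p.2 * e) + 1) :
    monomial m (1 : R) ∈
      sInf {p : Submodule R (MvPolynomial (σ × ℕ) R) |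
        (∀ i : σ, X (i, (0 : ℕ)) ∈ p) ∧ ∀ a ∈ p, ∀ b ∈ p, a * δ b ∈ p} := by
  rw [Submodule.mem_sInf]
  rintro p ⟨hX, hp⟩
  have hbalanced : m.toMultiset.card = totalOrder m.toMultiset + 1 := by
    simpa [totalOrder, sum_map_toMultiset, Finsupp.card_toMultiset, Function.id_def, mul_comm]
      using hm
  rw [← diffMonomial_X_toMultiset hδ]
  exact diffMonomial_mem hX hp hbalanced

end MvPolynomial

/-- Every monomial `u` with `deg u - d u = 1` belongs to the smallest `k`-subspace of
`A = k[X(i,r)]` containing the `X(i,0)` and closed under `f ∘ g := f * δ g`. -/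
theorem monomial_mem_novikov (k : Type*) [Field k] [CharZero k] (n : ℕ) (hn : 0 < n)
    (δ : Derivation k (MvPolynomial (Fin n × ℕ) k) (MvPolynomial (Fin n × ℕ) k))
    (hδ : ∀ (i : Fin n) (r : ℕ), δ (X (i, r)) = X (i, r + 1))
    (m : (Fin n × ℕ) →₀ ℕ)
    (hm : (m.sum fun _ e => e) = (m.sum fun p e => p.2 * e) + 1) :
    (monomial m (1 : k)) ∈
      sInf {p : Submodule k (MvPolynomial (Fin n × ℕ) k) |
        (∀ i : Fin n, X (i, (0 : ℕ)) ∈ p) ∧ ∀ a ∈ p, ∀ b ∈ p, a * δ b ∈ p} :=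
  monomial_mem_novikov_general δ hδ m hm
end

section
/- The derivation D₁ of A defined by D₁(f) = (1/2)·δ²(w)·∂₁(f) satisfies D₁(w) = 0 and D₁(δ²(w)) = 0. -/
open MvPolynomial

/-!
A derivation of a polynomial ring is determined by its values on the variables, and on them `∂₁`
commutes with `δ`; hence the two commute everywhere. Since `∂₁` kills `w`, it kills every `δⁿ(w)`,
and so does every multiple of `∂₁`.
-/

theorem derivation_commute_of_forall_X {σ R : Type*} [CommRing R]
    {D E : Derivation R (MvPolynomial σ R) (MvPolynomial σ R)}
    (h : ∀ i, D (E (X i)) = E (D (X i))) : Function.Commute D E := by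
  have lie_eq_zero : ⁅D, E⁆ = 0 := derivation_ext fun i => by
    rw [Derivation.commutator_apply, h i, sub_self, Derivation.zero_apply]
  intro f
  rw [← sub_eq_zero, ← Derivation.commutator_apply, lie_eq_zero, Derivation.zero_apply]

theorem derivation_commute_of_map_X_succ {ι R : Type*} [CommRing R]
    {D δ : Derivation R (MvPolynomial (ι × ℕ) R) (MvPolynomial (ι × ℕ) R)}
    (hδ : ∀ i r, δ (X (i, r)) = X (i, r + 1))
    (hD : ∀ i r, D (X (i, r + 1)) = δ (D (X (i, r)))) : Function.Commute D δ :=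
  derivation_commute_of_forall_X fun (i, r) => by rw [hδ, hD]

theorem derivation_sq_sub_mul_eq_zero {R A : Type*} [CommRing R] [CommRing A] [Algebra R A]
    (D : Derivation R A A) {x y z : A} (hx : D x = 2 * y) (hy : D y = z) (hz : D z = 0) :
    D (y ^ 2 - x * z) = 0 := by
  simp only [map_sub, pow_two, Derivation.leibniz, smul_eq_mul, hx, hy, hz]
  ring

theorem D1_w_eq_zero_general {R : Type*} [CommRing R]
    {δ d1 D1 : Derivation R (MvPolynomial (Fin 3 × ℕ) R) (MvPolynomial (Fin 3 × ℕ) R)}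
    (hδ : ∀ (i : Fin 3) (r : ℕ), δ (X (i, r)) = X (i, r + 1))
    (hd1x : ∀ r : ℕ, d1 (X (0, r)) = 2 * X (1, r))
    (hd1y : ∀ r : ℕ, d1 (X (1, r)) = X (2, r))
    (hd1z : ∀ r : ℕ, d1 (X (2, r)) = 0)
    {w : MvPolynomial (Fin 3 × ℕ) R} (hw : w = X (1, 0) ^ 2 - X (0, 0) * X (2, 0))
    {g : MvPolynomial (Fin 3 × ℕ) R} (hD1 : ∀ f, D1 f = g * d1 f) (n : ℕ) :
    D1 (δ^[n] w) = 0 := by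
  have d1_commute : Function.Commute d1 δ := derivation_commute_of_map_X_succ hδ fun i r => by
    match i with
    | 0 => rw [hd1x, hd1x, two_mul, two_mul, map_add, hδ]
    | 1 => rw [hd1y, hd1y, hδ]
    | 2 => rw [hd1z, hd1z, map_zero]
  have d1_w : d1 w = 0 :=
    hw ▸ derivation_sq_sub_mul_eq_zero d1 (hd1x 0) (hd1y 0) (hd1z 0)
  rw [hD1, (d1_commute.iterate_right n).eq w, d1_w, iterate_map_zero, mul_zero]

/-- The derivation `D₁ = (1/2)·δ²(w) • ∂₁` satisfies `D₁ w = 0` and `D₁ (δ² w) = 0`. -/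
theorem D1_w_eq_zero (k : Type*) [Field k] [CharZero k]
    (δ d1 D1 : Derivation k (MvPolynomial (Fin 3 × ℕ) k) (MvPolynomial (Fin 3 × ℕ) k))
    (hδ : ∀ (i : Fin 3) (r : ℕ), δ (X (i, r)) = X (i, r + 1))
    (hd1x : ∀ r : ℕ, d1 (X ((0 : Fin 3), r)) = 2 * X ((1 : Fin 3), r))
    (hd1y : ∀ r : ℕ, d1 (X ((1 : Fin 3), r)) = X ((2 : Fin 3), r))
    (hd1z : ∀ r : ℕ, d1 (X ((2 : Fin 3), r)) = 0)
    (w : MvPolynomial (Fin 3 × ℕ) k)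
    (hw : w = X ((1 : Fin 3), (0 : ℕ)) ^ 2 - X ((0 : Fin 3), (0 : ℕ)) * X ((2 : Fin 3), (0 : ℕ)))
    (hD1 : ∀ f : MvPolynomial (Fin 3 × ℕ) k, D1 f = C ((2 : k)⁻¹) * δ (δ w) * d1 f) :
    D1 w = 0 ∧ D1 (δ (δ w)) = 0 := by
  have D1_iterate := D1_w_eq_zero_general hδ hd1x hd1y hd1z hw hD1
  exact ⟨D1_iterate 0, D1_iterate 2⟩
end

section
/- There exists a k-algebra automorphism ψ of A such that for every f ∈ A and every m ∈ ℕ with D₁^m(f) = 0 one has ψ(f) = Σ_{n < m} D₁^n(f)/n!, and this ψ satisfies, with w₀ = (1/2)·(2·(y ∘ y) − x ∘ z − z ∘ x) and f ∘ g := f·δ(g): ψ(x) = x + 2·(y ∘ w₀) + ((z ∘ w₀) ∘ w₀), ψ(y) = y + (z ∘ w₀), ψ(z) = z. -/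
open MvPolynomial

/-!
For a locally nilpotent derivation `D` of a commutative `ℚ`-algebra, the divided powers `Dⁿ / n!`
satisfy the Leibniz rule without binomial coefficients, so `exp D` is multiplicative by the Cauchy
product formula; it is bijective because it is unipotent for the filtration by the `ker Dᵐ`.

With `w = y² - xz` one has `d w = 0` and `w₀ = δ w / 2`. Since `d` commutes with `δ`, the
coefficient `u = δ w₀` of `D = u • d` is killed by `d`, whence `Dⁿ = uⁿ dⁿ`, and `exp D` can be read
off from `x ↦ 2y ↦ 2z ↦ 0` under `d`.
-/

open Finset

section LocallyNilpotent

variable {R M : Type*} [Semiring R] [AddCommGroup M] [Module R M]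

/-- An endomorphism is locally nilpotent if every element is killed by one of its powers. -/
def IsLocallyNilpotent (T : Module.End R M) : Prop :=
  ∀ f, ∃ m, (T ^ m) f = 0

theorem IsLocallyNilpotent.bijective_of_unipotent {T φ : Module.End R M}
    (hT : IsLocallyNilpotent T)
    (hφ : ∀ m f, (T ^ (m + 1)) f = 0 → (T ^ m) (φ f - f) = 0) : Function.Bijective φ := by
  constructor
  · refine (injective_iff_map_eq_zero φ).2 fun f hf ↦ ?_
    obtain ⟨m, hm⟩ := hT f
    induction m with
    | zero => simpa using hm
    | succ m ih => exact ih (by simpa [hf] using hφ m f hm)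
  · intro f
    obtain ⟨m, hm⟩ := hT f
    induction m generalizing f with
    | zero => exact ⟨0, by simpa using hm.symm⟩
    | succ m ih =>
      obtain ⟨g, hg⟩ := ih (φ f - f) (hφ m f hm)
      exact ⟨f - g, by rw [map_sub, hg, sub_sub_cancel]⟩

variable [Module ℚ M]

/-- The divided power `Tⁿ / n!` of an endomorphism `T`, the `n`-th term of its exponential. -/
noncomputable def dividedPower (T : Module.End R M) (n : ℕ) : Module.End R M :=
  (n.factorial : ℚ)⁻¹ • T ^ n

theorem dividedPower_apply (T : Module.End R M) (n : ℕ) (f : M) :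
    dividedPower T n f = (n.factorial : ℚ)⁻¹ • (T ^ n) f :=
  rfl

theorem support_dividedPower_subset {T : Module.End R M} {f : M} {m : ℕ} (h : (T ^ m) f = 0) :
    (Function.support fun n ↦ dividedPower T n f) ⊆ range m := by
  intro n hn
  contrapose! hn
  have hmn : m ≤ n := by simpa using hn
  simp [dividedPower_apply, Module.End.pow_map_zero_of_le hmn h]

namespace IsLocallyNilpotent

variable {T : Module.End R M}

theorem finite_support_dividedPower (hT : IsLocallyNilpotent T) (f : M) :
    (Function.support fun n ↦ dividedPower T n f).Finite := by
  obtain ⟨m, hm⟩ := hT f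
  exact (range m).finite_toSet.subset (support_dividedPower_subset hm)

/-- The exponential `∑ Tⁿ / n!` of a locally nilpotent endomorphism `T`. -/
noncomputable def exp (hT : IsLocallyNilpotent T) : Module.End R M where
  toFun f := ∑ᶠ n, dividedPower T n f
  map_add' f g := by
    simp only [map_add]
    exact finsum_add_distrib (hT.finite_support_dividedPower f) (hT.finite_support_dividedPower g)
  map_smul' r f := by
    simp only [map_smul, RingHom.id_apply]
    exact (smul_finsum' r (hT.finite_support_dividedPower f)).symm

theorem exp_apply (hT : IsLocallyNilpotent T) (f : M) : hT.exp f = ∑ᶠ n, dividedPower T n f :=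
  rfl

theorem exp_apply_eq_sum (hT : IsLocallyNilpotent T) {f : M} {m : ℕ} (h : (T ^ m) f = 0) :
    hT.exp f = ∑ n ∈ range m, dividedPower T n f :=
  finsum_eq_sum_of_support_subset _ (support_dividedPower_subset h)

theorem pow_exp_sub_self (hT : IsLocallyNilpotent T) {f : M} {m : ℕ} (h : (T ^ (m + 1)) f = 0) :
    (T ^ m) (hT.exp f - f) = 0 := by
  rw [hT.exp_apply_eq_sum h, sum_range_succ', map_sub, map_add, map_sum, sum_eq_zero]
  · simp [dividedPower_apply]
  · intro n _
    rw [dividedPower_apply, map_rat_smul, ← Module.End.mul_apply, ← pow_add,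
      Module.End.pow_map_zero_of_le (by lia) h, smul_zero]

theorem bijective_exp (hT : IsLocallyNilpotent T) : Function.Bijective hT.exp :=
  hT.bijective_of_unipotent fun _ _ ↦ hT.pow_exp_sub_self

end IsLocallyNilpotent

end LocallyNilpotent

section CauchyProduct

variable {A : Type*} [Semiring A]

theorem finsum_coeff_eq_eval_one (p : Polynomial A) : ∑ᶠ n, p.coeff n = p.eval 1 := by
  rw [Polynomial.eval_eq_sum, Polynomial.sum, finsum_eq_sum_of_support_subset (s := p.support)]
  · simp
  · intro n hn
    simpa using hn

theorem exists_polynomial_coeff_eq {a : ℕ → A} (ha : a.support.Finite) :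
    ∃ p : Polynomial A, p.coeff = a :=
  ⟨⟨.ofCoeff (.ofSupportFinite a ha)⟩, by rw [Polynomial.coeff_ofFinsupp]; rfl⟩

theorem finsum_mul_finsum_eq_finsum_sum_antidiagonal {a b : ℕ → A}
    (ha : a.support.Finite) (hb : b.support.Finite) :
    (∑ᶠ n, a n) * ∑ᶠ n, b n = ∑ᶠ n, ∑ p ∈ antidiagonal n, a p.1 * b p.2 := by
  obtain ⟨p, rfl⟩ := exists_polynomial_coeff_eq ha
  obtain ⟨q, rfl⟩ := exists_polynomial_coeff_eq hb
  have eval_mul : (p * q).eval 1 = p.eval 1 * q.eval 1 :=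
    Polynomial.eval₂_mul_noncomm _ _ fun _ ↦ Commute.one_right _
  simpa only [← finsum_coeff_eq_eval_one, Polynomial.coeff_mul] using eval_mul.symm

end CauchyProduct

section Derivation

variable {R A : Type*} [CommSemiring R]

theorem derivation_pow_mul [CommSemiring A] [Algebra R A] (D : Derivation R A A) (n : ℕ)
    (f g : A) :
    ((D : Module.End R A) ^ n) (f * g) = ∑ p ∈ antidiagonal n,
      n.choose p.1 • (((D : Module.End R A) ^ p.1) f * ((D : Module.End R A) ^ p.2) g) := by
  induction n with
  | zero => simp
  | succ n ih =>
    rw [sum_antidiagonal_choose_succ_nsmul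
      (fun i j ↦ ((D : Module.End R A) ^ i) f * ((D : Module.End R A) ^ j) g) n, pow_succ',
      Module.End.mul_apply, ih, map_sum, ← sum_add_distrib]
    refine sum_congr rfl fun p hp ↦ ?_
    rw [map_nsmul, Derivation.coeFn_coe, Derivation.leibniz,
      Nat.choose_symm_of_eq_add (by rw [add_comm, mem_antidiagonal.1 hp] : n = p.2 + p.1)]
    simp only [pow_succ', Module.End.mul_apply, Derivation.coeFn_coe, smul_eq_mul, nsmul_eq_mul]
    ring

theorem derivation_smul_iterate [CommSemiring A] [Algebra R A] {d : Derivation R A A} {u : A}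
    (hu : d u = 0) (n : ℕ) (f : A) : (u • d)^[n] f = u ^ n * d^[n] f := by
  induction n with
  | zero => simp
  | succ n ih =>
    simp only [Function.iterate_succ_apply', ih, Derivation.smul_apply, Derivation.leibniz,
      Derivation.leibniz_pow, hu, smul_eq_mul, nsmul_eq_mul]
    ring

variable [CommRing A] [Algebra R A] [Algebra ℚ A]

theorem dividedPower_derivation_mul (D : Derivation R A A) (n : ℕ) (f g : A) :
    dividedPower (D : Module.End R A) n (f * g) = ∑ p ∈ antidiagonal n,
      dividedPower (D : Module.End R A) p.1 f * dividedPower (D : Module.End R A) p.2 g := by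
  simp only [dividedPower_apply, derivation_pow_mul, smul_sum]
  refine sum_congr rfl fun p hp ↦ ?_
  obtain rfl := mem_antidiagonal.1 hp
  have factorial_ne_zero (i : ℕ) : (i.factorial : ℚ) ≠ 0 := mod_cast i.factorial_ne_zero
  rw [smul_mul_smul_comm, ← Nat.cast_smul_eq_nsmul ℚ, smul_smul, Nat.cast_add_choose]
  congr 1
  field_simp [factorial_ne_zero]

namespace IsLocallyNilpotent

variable {D : Derivation R A A}

theorem exp_one (hD : IsLocallyNilpotent (D : Module.End R A)) : hD.exp 1 = 1 := by
  rw [hD.exp_apply_eq_sum (m := 1) (by simp)]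
  simp [dividedPower_apply]

theorem exp_mul (hD : IsLocallyNilpotent (D : Module.End R A)) (f g : A) :
    hD.exp (f * g) = hD.exp f * hD.exp g := by
  simp only [exp_apply, dividedPower_derivation_mul]
  exact (finsum_mul_finsum_eq_finsum_sum_antidiagonal (hD.finite_support_dividedPower f)
    (hD.finite_support_dividedPower g)).symm

/-- The exponential of a locally nilpotent derivation, as an algebra automorphism. -/
noncomputable def expAlgEquiv (hD : IsLocallyNilpotent (D : Module.End R A)) : A ≃ₐ[R] A :=
  AlgEquiv.ofBijective (AlgHom.ofLinearMap hD.exp hD.exp_one hD.exp_mul) hD.bijective_exp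

theorem expAlgEquiv_apply_eq_sum (hD : IsLocallyNilpotent (D : Module.End R A)) {f : A} {m : ℕ}
    (h : D^[m] f = 0) :
    hD.expAlgEquiv f = ∑ n ∈ range m, (n.factorial : ℚ)⁻¹ • D^[n] f :=
  (hD.exp_apply_eq_sum (m := m) (by rwa [Module.End.pow_apply])).trans
    (sum_congr rfl fun n _ ↦ by rw [dividedPower_apply, Module.End.pow_apply, Derivation.coeFn_coe])

theorem expAlgEquiv_smul_apply_eq_sum {d : Derivation R A A} {u : A} (hu : d u = 0)
    (hud : IsLocallyNilpotent ((u • d : Derivation R A A) : Module.End R A)) {f : A} {m : ℕ}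
    (h : d^[m] f = 0) :
    hud.expAlgEquiv f = ∑ n ∈ range m, (n.factorial : ℚ)⁻¹ • (u ^ n * d^[n] f) := by
  simp only [← derivation_smul_iterate hu]
  exact hud.expAlgEquiv_apply_eq_sum (by rw [derivation_smul_iterate hu, h, mul_zero])

theorem expAlgEquiv_smul_apply_of_apply_eq_zero {d : Derivation R A A} {u : A} (hu : d u = 0)
    (hud : IsLocallyNilpotent ((u • d : Derivation R A A) : Module.End R A)) {f : A}
    (h : d f = 0) : hud.expAlgEquiv f = f := by
  simp [expAlgEquiv_smul_apply_eq_sum hu hud (m := 1) h]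

theorem expAlgEquiv_smul_apply_of_iterate_two_eq_zero {d : Derivation R A A} {u : A}
    (hu : d u = 0) (hud : IsLocallyNilpotent ((u • d : Derivation R A A) : Module.End R A))
    {f : A} (h : d (d f) = 0) : hud.expAlgEquiv f = f + u * d f := by
  simp [expAlgEquiv_smul_apply_eq_sum hu hud (m := 2) h, sum_range_succ]

theorem expAlgEquiv_smul_apply_of_iterate_three_eq_zero {d : Derivation R A A} {u : A}
    (hu : d u = 0) (hud : IsLocallyNilpotent ((u • d : Derivation R A A) : Module.End R A))
    {f : A} (h : d (d (d f)) = 0) :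
    hud.expAlgEquiv f = f + u * d f + (2 : ℚ)⁻¹ • (u ^ 2 * d (d f)) := by
  simp [expAlgEquiv_smul_apply_eq_sum hu hud (m := 3) h, sum_range_succ]

end IsLocallyNilpotent

end Derivation

theorem mvPolynomial_derivation_comm {σ R : Type*} [CommRing R]
    {D₁ D₂ : Derivation R (MvPolynomial σ R) (MvPolynomial σ R)}
    (h : ∀ i, D₁ (D₂ (X i)) = D₂ (D₁ (X i))) (f : MvPolynomial σ R) :
    D₁ (D₂ f) = D₂ (D₁ f) := by
  have bracket_eq_zero : ⁅D₁, D₂⁆ = 0 :=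
    derivation_ext fun i ↦ by simp [Derivation.commutator_apply, h]
  simpa [Derivation.commutator_apply, sub_eq_zero] using DFunLike.congr_fun bracket_eq_zero f

theorem exp_D1_automorphism_general {k A : Type*} [CommSemiring k] [CommRing A] [Algebra k A]
    [Algebra ℚ A] (δ d D : Derivation k A A) (hcomm : ∀ f, d (δ f) = δ (d f)) {x y z : A}
    (hx : d x = 2 * y) (hy : d y = z) (hz : d z = 0)
    {w : A} (hw : w = y ^ 2 - x * z) (hD : ∀ f, D f = (2 : ℚ)⁻¹ • δ (δ w) * d f)
    (hln : ∀ f, ∃ m : ℕ, D^[m] f = 0)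
    {w₀ : A} (hw₀ : w₀ = (2 : ℚ)⁻¹ • (2 * (y * δ y) - x * δ z - z * δ x)) :
    ∃ ψ : A ≃ₐ[k] A,
      (∀ f (m : ℕ), D^[m] f = 0 → ψ f = ∑ n ∈ range m, (n.factorial : ℚ)⁻¹ • D^[n] f) ∧
      ψ x = x + 2 * (y * δ w₀) + z * δ w₀ * δ w₀ ∧ ψ y = y + z * δ w₀ ∧ ψ z = z := by
  have δw₀_eq : δ w₀ = (2 : ℚ)⁻¹ • δ (δ w) := by
    rw [← map_rat_smul δ, hw₀, hw]
    congr 2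
    simp only [map_sub, Derivation.leibniz, pow_two, smul_eq_mul]
    ring
  have dw_eq_zero : d w = 0 := by
    simp only [hw, map_sub, Derivation.leibniz, pow_two, smul_eq_mul, hx, hy, hz]
    ring
  have dδw₀_eq_zero : d (δ w₀) = 0 := by
    rw [δw₀_eq, map_rat_smul, hcomm, hcomm, dw_eq_zero, map_zero, map_zero, smul_zero]
  obtain rfl : D = δ w₀ • d := Derivation.ext fun f ↦ by rw [hD, ← δw₀_eq]; rfl
  have hnil : IsLocallyNilpotent ((δ w₀ • d : Derivation k A A) : Module.End k A) := fun f ↦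
    (hln f).imp fun m hm ↦ by rwa [Module.End.pow_apply]
  have ddx_eq : d (d x) = 2 * z := by rw [hx, two_mul, map_add, hy, two_mul]
  have dddx_eq_zero : d (d (d x)) = 0 := by rw [ddx_eq, two_mul, map_add, hz, add_zero]
  have half_smul_two_mul (f : A) : (2 : ℚ)⁻¹ • (2 * f) = f := by
    rw [two_mul, ← two_smul ℚ, inv_smul_smul₀ two_ne_zero]
  refine ⟨hnil.expAlgEquiv, fun f m ↦ hnil.expAlgEquiv_apply_eq_sum, ?_, ?_, ?_⟩
  · rw [IsLocallyNilpotent.expAlgEquiv_smul_apply_of_iterate_three_eq_zero dδw₀_eq_zero hnil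
      dddx_eq_zero, ddx_eq, hx, mul_left_comm (δ w₀ ^ 2), half_smul_two_mul]
    ring
  · rw [IsLocallyNilpotent.expAlgEquiv_smul_apply_of_iterate_two_eq_zero dδw₀_eq_zero hnil
      (by rw [hy, hz]), hy, mul_comm z]
  · exact IsLocallyNilpotent.expAlgEquiv_smul_apply_of_apply_eq_zero dδw₀_eq_zero hnil hz

/-- The exponential automorphism `ψ = exp D₁` exists and satisfies
`ψ x = x + 2(y ∘ w₀) + ((z ∘ w₀) ∘ w₀)`, `ψ y = y + z ∘ w₀`, `ψ z = z`,
where `f ∘ g = f·δ g` and `w₀ = (1/2)(2(y∘y) - x∘z - z∘x)`. -/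
theorem exp_D1_automorphism (k : Type*) [Field k] [CharZero k]
    (δ d1 D1 : Derivation k (MvPolynomial (Fin 3 × ℕ) k) (MvPolynomial (Fin 3 × ℕ) k))
    (hδ : ∀ (i : Fin 3) (r : ℕ), δ (X (i, r)) = X (i, r + 1))
    (hd1x : ∀ r : ℕ, d1 (X ((0 : Fin 3), r)) = 2 * X ((1 : Fin 3), r))
    (hd1y : ∀ r : ℕ, d1 (X ((1 : Fin 3), r)) = X ((2 : Fin 3), r))
    (hd1z : ∀ r : ℕ, d1 (X ((2 : Fin 3), r)) = 0)
    (w : MvPolynomial (Fin 3 × ℕ) k)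
    (hw : w = X ((1 : Fin 3), (0 : ℕ)) ^ 2 - X ((0 : Fin 3), (0 : ℕ)) * X ((2 : Fin 3), (0 : ℕ)))
    (hD1 : ∀ f : MvPolynomial (Fin 3 × ℕ) k, D1 f = C ((2 : k)⁻¹) * δ (δ w) * d1 f)
    (hln : ∀ f : MvPolynomial (Fin 3 × ℕ) k, ∃ m : ℕ, (⇑D1)^[m] f = 0)
    (w0 : MvPolynomial (Fin 3 × ℕ) k)
    (hw0 : w0 = C ((2 : k)⁻¹) *
      (2 * (X ((1 : Fin 3), (0 : ℕ)) * δ (X ((1 : Fin 3), (0 : ℕ)))) -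
        X ((0 : Fin 3), (0 : ℕ)) * δ (X ((2 : Fin 3), (0 : ℕ))) -
        X ((2 : Fin 3), (0 : ℕ)) * δ (X ((0 : Fin 3), (0 : ℕ))))) :
    ∃ ψ : MvPolynomial (Fin 3 × ℕ) k ≃ₐ[k] MvPolynomial (Fin 3 × ℕ) k,
      (∀ (f : MvPolynomial (Fin 3 × ℕ) k) (m : ℕ), (⇑D1)^[m] f = 0 →
        ψ f = ∑ n ∈ Finset.range m, (n.factorial : k)⁻¹ • (⇑D1)^[n] f) ∧
      ψ (X ((0 : Fin 3), (0 : ℕ))) =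
        X ((0 : Fin 3), (0 : ℕ)) + 2 * (X ((1 : Fin 3), (0 : ℕ)) * δ w0) +
          (X ((2 : Fin 3), (0 : ℕ)) * δ w0) * δ w0 ∧
      ψ (X ((1 : Fin 3), (0 : ℕ))) = X ((1 : Fin 3), (0 : ℕ)) + X ((2 : Fin 3), (0 : ℕ)) * δ w0 ∧
      ψ (X ((2 : Fin 3), (0 : ℕ))) = X ((2 : Fin 3), (0 : ℕ)) := by
  have hcomm : ∀ f, d1 (δ f) = δ (d1 f) := mvPolynomial_derivation_comm fun ⟨i, r⟩ ↦ by
    fin_cases i <;> simp [hδ, hd1x, hd1y, hd1z, two_mul]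
  have C_half_mul (p : MvPolynomial (Fin 3 × ℕ) k) : C (2 : k)⁻¹ * p = (2 : ℚ)⁻¹ • p := by
    rw [C_mul']
    exact_mod_cast inv_natCast_smul_eq k ℚ 2 p
  simp only [C_half_mul] at hD1 hw0
  simpa only [inv_natCast_smul_eq ℚ k] using exp_D1_automorphism_general δ d1 D1 hcomm
    (hd1x 0) (hd1y 0) (hd1z 0) hw hD1 hln hw0
end
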